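/- arXiv:2209.10140 — 4 statements merged into one kernel-verified Lean document; each statement's English description precedes it below -/
import Mathlib

section
/- For every 0 ≤ α < 2, the function β ↦ (β²+1)^{1−α/2} F(α,β) is differentiable on [0,∞) and its derivative satisfies d/dβ [(β²+1)^{1−α/2} F(α,β)] = −(α−1)/(β²+1)^{α/2} for every β ≥ 0. -/
open MeasureTheory Real

/-- `F α β = β/(β²+1) − (α/(β²+1)^{1−α/2}) ∫_{−arctan β}^{π/2} cos^α θ dθ`. -/
noncomputable def F (α β : ℝ) : ℝ :=
  β / (β ^ 2 + 1) -
    α / (β ^ 2 + 1) ^ (1 - α / 2) * ∫ θ in (-Real.arctan β)..(Real.pi / 2), Real.cos θ ^ α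

/-!
After multiplication by `(β² + 1)^(1 - α/2)` the function is
`β (β² + 1)^(-α/2) - α ∫_{-arctan β}^{π/2} cos^α`. As `cos (arctan β) = (β² + 1)^(-1/2)`, the
fundamental theorem of calculus and the chain rule give the integral the derivative
`(β² + 1)^(-α/2 - 1)`. The elementary term contributes `α` times the same power, so the two cancel
and only `(1 - α) (β² + 1)^(-α/2)` is left. For negative `α` the integrand is singular at `π/2`;
after the reflection `θ = π/2 - x`, its integrability follows from `sin^α x = x^α sinc^α x`, where
`sinc` is continuous and positive on `[0, π)`.
-/

lemma sinc_pos_of_abs_lt_pi {x : ℝ} (hx : |x| < π) : 0 < sinc x := by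
  obtain ⟨hxl, hxr⟩ := abs_lt.mp hx
  rcases lt_trichotomy x 0 with hneg | rfl | hpos
  · rw [sinc_of_ne_zero hneg.ne]
    exact div_pos_of_neg_of_neg (sin_neg_of_neg_of_neg_pi_lt hneg hxl) hneg
  · simp
  · rw [sinc_of_ne_zero hpos.ne']
    exact div_pos (sin_pos_of_pos_of_lt_pi hpos hxr) hpos

lemma intervalIntegrable_sin_rpow {α b : ℝ} (hα : -1 < α) (hb₀ : 0 ≤ b) (hb : b < π) :
    IntervalIntegrable (fun x ↦ sin x ^ α) volume 0 b := by
  have sinc_pos : ∀ x ∈ Set.uIcc 0 b, 0 < sinc x := by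
    rw [Set.uIcc_of_le hb₀]
    rintro x ⟨hx₀, hxb⟩
    exact sinc_pos_of_abs_lt_pi (by rw [abs_of_nonneg hx₀]; exact hxb.trans_lt hb)
  have sinc_rpow_cont : ContinuousOn (fun x ↦ sinc x ^ α) (Set.uIcc 0 b) :=
    continuous_sinc.continuousOn.rpow_const fun x hx ↦ Or.inl (sinc_pos x hx).ne'
  refine ((intervalIntegral.intervalIntegrable_rpow' hα).mul_continuousOn sinc_rpow_cont).congr ?_
  rw [Set.uIoc_of_le hb₀]
  rintro x ⟨hx₀, hxb⟩
  have hsinc : 0 < sinc x := sinc_pos x (by rw [Set.uIcc_of_le hb₀]; exact ⟨hx₀.le, hxb⟩)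
  have sin_eq : sin x = x * sinc x := by
    rw [sinc_of_ne_zero hx₀.ne', mul_div_cancel₀ _ hx₀.ne']
  simp only [sin_eq, mul_rpow hx₀.le hsinc.le]

lemma intervalIntegrable_cos_rpow {α a : ℝ} (hα : -1 < α) (ha : -(π / 2) < a) (ha' : a ≤ π / 2) :
    IntervalIntegrable (fun θ ↦ cos θ ^ α) volume a (π / 2) := by
  have sin_integrable : IntervalIntegrable (fun x ↦ sin x ^ α) volume 0 (π / 2 - a) :=
    intervalIntegrable_sin_rpow hα (by linarith) (by linarith)
  simpa only [sin_pi_div_two_sub, sub_zero, sub_sub_cancel] using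
    (sin_integrable.comp_sub_left (π / 2)).symm

lemma hasDerivAt_integral_cos_rpow {α a : ℝ} (hα : -1 < α) (ha : a ∈ Set.Ioo (-(π / 2)) (π / 2)) :
    HasDerivAt (fun u ↦ ∫ θ in u..π / 2, cos θ ^ α) (-cos a ^ α) a := by
  have hmeas : Measurable fun θ ↦ cos θ ^ α := by fun_prop
  exact intervalIntegral.integral_hasDerivAt_left (intervalIntegrable_cos_rpow hα ha.1 ha.2.le)
    hmeas.stronglyMeasurable.stronglyMeasurableAtFilter
    (continuous_cos.continuousAt.rpow_const (Or.inl (cos_pos_of_mem_Ioo ha).ne'))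

lemma cos_arctan_rpow (α x : ℝ) : cos (arctan x) ^ α = (x ^ 2 + 1) ^ (-(α / 2)) := by
  have hx : 0 ≤ x ^ 2 + 1 := by positivity
  rw [cos_arctan, add_comm, one_div, sqrt_eq_rpow, ← rpow_neg hx, ← rpow_mul hx]
  ring_nf

lemma hasDerivAt_integral_neg_arctan_cos_rpow {α : ℝ} (hα : -1 < α) (x : ℝ) :
    HasDerivAt (fun b ↦ ∫ θ in (-arctan b)..π / 2, cos θ ^ α)
      ((x ^ 2 + 1) ^ (-(α / 2) - 1)) x := by
  have arctan_mem : -arctan x ∈ Set.Ioo (-(π / 2)) (π / 2) :=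
    ⟨neg_lt_neg (arctan_lt_pi_div_two x), neg_lt.mp (neg_pi_div_two_lt_arctan x)⟩
  refine ((hasDerivAt_integral_cos_rpow hα arctan_mem).comp x
    (hasDerivAt_arctan x).neg).congr_deriv ?_
  rw [cos_neg, cos_arctan_rpow, rpow_sub_one (by positivity), add_comm 1 (x ^ 2)]
  ring

lemma hasDerivAt_mul_sq_add_one_rpow (p x : ℝ) :
    HasDerivAt (fun b ↦ b * (b ^ 2 + 1) ^ p)
      ((1 + 2 * p) * (x ^ 2 + 1) ^ p - 2 * p * (x ^ 2 + 1) ^ (p - 1)) x := by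
  have hx : x ^ 2 + 1 ≠ 0 := by positivity
  have base_deriv : HasDerivAt (fun b : ℝ ↦ b ^ 2 + 1) (2 * x) x := by
    simpa using (hasDerivAt_pow 2 x).add_const 1
  refine ((hasDerivAt_id x).mul (base_deriv.rpow_const (Or.inl hx))).congr_deriv ?_
  rw [rpow_sub_one hx, id]
  field_simp
  ring

lemma sq_add_one_rpow_mul_F (α b : ℝ) :
    (b ^ 2 + 1) ^ (1 - α / 2) * F α b =
      b * (b ^ 2 + 1) ^ (-(α / 2)) - α * ∫ θ in (-arctan b)..π / 2, cos θ ^ α := by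
  have hb : 0 < b ^ 2 + 1 := by positivity
  have rpow_split : (b ^ 2 + 1) ^ (1 - α / 2) = (b ^ 2 + 1) * (b ^ 2 + 1) ^ (-(α / 2)) := by
    rw [sub_eq_add_neg, rpow_add hb, rpow_one]
  have rpow_ne : (b ^ 2 + 1) ^ (-(α / 2)) ≠ 0 := (rpow_pos_of_pos hb _).ne'
  rw [F, rpow_split]
  field_simp

theorem stmt0_general {α : ℝ} (hα : -1 < α) (β : ℝ) :
    HasDerivAt (fun b : ℝ => (b ^ 2 + 1) ^ (1 - α / 2) * F α b)
      (-(α - 1) / (β ^ 2 + 1) ^ (α / 2)) β := by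
  simp only [sq_add_one_rpow_mul_F]
  refine ((hasDerivAt_mul_sq_add_one_rpow (-(α / 2)) β).sub
    ((hasDerivAt_integral_neg_arctan_cos_rpow hα β).const_mul α)).congr_deriv ?_
  rw [div_eq_mul_inv (-(α - 1)), ← rpow_neg (by positivity)]
  ring

theorem stmt0 (α : ℝ) (hα0 : 0 ≤ α) (hα2 : α < 2) :
    ∀ β ∈ Set.Ici (0 : ℝ),
      HasDerivWithinAt (fun b : ℝ => (b ^ 2 + 1) ^ (1 - α / 2) * F α b)
        (-(α - 1) / (β ^ 2 + 1) ^ (α / 2)) (Set.Ici 0) β :=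
  fun β _ ↦ (stmt0_general (by linarith) β).hasDerivWithinAt
end

section
/- For every α with 1 ≤ α < 2 and every β ≥ 0, one has F(α,β) < 0. -/
open MeasureTheory Real

/- With `a = arctan β` one has `β² + 1 = 1 / (cos a)²`, so `F α β` has the sign of
`sin a * cos a ^ (α - 1) - α * ∫ θ in -a..π/2, cos θ ^ α`. If `a ≤ 0`, the first term is nonpositive
and the integral is positive. If `a ≥ 0`, the part of the integral over `[-a, 0]` already dominates
the first term, because there `cos θ ^ α ≥ cos θ * cos a ^ (α - 1)`. -/

section CosRpow

variable {a b r : ℝ}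

theorem intervalIntegrable_cos_rpow_s1 (hr : 0 ≤ r) (a b : ℝ) :
    IntervalIntegrable (fun θ ↦ cos θ ^ r) volume a b :=
  (continuous_cos.rpow_const fun _ ↦ Or.inr hr).intervalIntegrable a b

theorem integral_cos_rpow_pos (hr : 0 ≤ r) (ha : -(π / 2) ≤ a) (hab : a < b) (hb : b ≤ π / 2) :
    0 < ∫ θ in a..b, cos θ ^ r :=
  intervalIntegral.intervalIntegral_pos_of_pos_on (intervalIntegrable_cos_rpow_s1 hr a b)
    (fun _ hθ ↦ rpow_pos_of_pos
      (cos_pos_of_mem_Ioo ⟨ha.trans_lt hθ.1, hθ.2.trans_le hb⟩) r) hab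

theorem integral_cos_rpow_neg_zero (a r : ℝ) :
    ∫ θ in (-a)..0, cos θ ^ r = ∫ θ in 0..a, cos θ ^ r := by
  simpa only [cos_neg, neg_zero] using
    (intervalIntegral.integral_comp_neg (a := 0) (b := a) fun θ ↦ cos θ ^ r).symm

theorem sin_mul_cos_rpow_sub_one_le_integral (hr : 1 ≤ r) (ha₀ : 0 ≤ a) (ha : a ≤ π / 2) :
    sin a * cos a ^ (r - 1) ≤ ∫ θ in 0..a, cos θ ^ r := by
  have hcos_a : 0 ≤ cos a := cos_nonneg_of_mem_Icc ⟨by linarith, ha⟩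
  have cos_mul_le : ∀ θ ∈ Set.Icc 0 a, cos θ * cos a ^ (r - 1) ≤ cos θ ^ r := by
    intro θ hθ
    have hle : cos a ≤ cos θ := cos_le_cos_of_nonneg_of_le_pi hθ.1 (by linarith) hθ.2
    have hcos : 0 ≤ cos θ := hcos_a.trans hle
    calc cos θ * cos a ^ (r - 1)
        ≤ cos θ * cos θ ^ (r - 1) := by gcongr
      _ = cos θ ^ (1 + (r - 1)) := (rpow_one_add' hcos (by linarith)).symm
      _ = cos θ ^ r := by rw [add_sub_cancel]
  calc sin a * cos a ^ (r - 1)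
      = ∫ θ in 0..a, cos θ * cos a ^ (r - 1) := by
        rw [intervalIntegral.integral_mul_const, integral_cos, sin_zero, sub_zero]
    _ ≤ ∫ θ in 0..a, cos θ ^ r :=
        intervalIntegral.integral_mono_on ha₀
          ((continuous_cos.mul continuous_const).intervalIntegrable 0 a)
          (intervalIntegrable_cos_rpow_s1 (by linarith) 0 a) cos_mul_le

theorem sin_mul_cos_rpow_sub_one_lt_integral (hr : 1 ≤ r) (ha₁ : -(π / 2) < a)
    (ha₂ : a ≤ π / 2) :
    sin a * cos a ^ (r - 1) < ∫ θ in (-a)..(π / 2), cos θ ^ r := by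
  have hr₀ : 0 ≤ r := by linarith
  rcases le_total a 0 with ha | ha
  · calc sin a * cos a ^ (r - 1)
        ≤ 0 := mul_nonpos_of_nonpos_of_nonneg
          (sin_nonpos_of_nonpos_of_neg_pi_le ha (by linarith))
          (rpow_nonneg (cos_nonneg_of_mem_Icc ⟨ha₁.le, ha₂⟩) _)
      _ < ∫ θ in (-a)..(π / 2), cos θ ^ r :=
          integral_cos_rpow_pos hr₀ (by linarith) (by linarith) le_rfl
  · calc sin a * cos a ^ (r - 1)
        ≤ ∫ θ in 0..a, cos θ ^ r := sin_mul_cos_rpow_sub_one_le_integral hr ha ha₂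
      _ = ∫ θ in (-a)..0, cos θ ^ r := (integral_cos_rpow_neg_zero a r).symm
      _ < (∫ θ in (-a)..0, cos θ ^ r) + ∫ θ in 0..(π / 2), cos θ ^ r :=
          lt_add_of_pos_right _
            (integral_cos_rpow_pos hr₀ (by linarith [pi_pos]) pi_div_two_pos le_rfl)
      _ = ∫ θ in (-a)..(π / 2), cos θ ^ r :=
          intervalIntegral.integral_add_adjacent_intervals
            (intervalIntegrable_cos_rpow_s1 hr₀ _ _) (intervalIntegrable_cos_rpow_s1 hr₀ _ _)

end CosRpow

theorem sq_add_one_rpow_eq_cos_arctan_rpow (x r : ℝ) :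
    (x ^ 2 + 1) ^ r = cos (arctan x) ^ (-2 * r) := by
  have hcos : cos (arctan x) ^ (-2 : ℝ) = x ^ 2 + 1 := by
    rw [rpow_neg (cos_arctan_pos x).le, rpow_two, cos_sq_arctan, one_div, inv_inv, add_comm]
  rw [rpow_mul (cos_arctan_pos x).le, hcos]

theorem div_sq_add_one_eq_sin_mul_cos_arctan (x : ℝ) :
    x / (x ^ 2 + 1) = sin (arctan x) * cos (arctan x) := by
  rw [sin_arctan, cos_arctan, div_mul_div_comm, mul_one, mul_self_sqrt (by positivity), add_comm]

theorem F_eq_cos_arctan_rpow_mul (α β : ℝ) :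
    F α β = cos (arctan β) ^ (2 - α) *
      (sin (arctan β) * cos (arctan β) ^ (α - 1) -
        α * ∫ θ in (-arctan β)..(π / 2), cos θ ^ α) := by
  have hcos : 0 < cos (arctan β) := cos_arctan_pos β
  have hinv : ((β ^ 2 + 1) ^ (1 - α / 2))⁻¹ = cos (arctan β) ^ (2 - α) := by
    rw [sq_add_one_rpow_eq_cos_arctan_rpow, ← rpow_neg hcos.le,
      show -(-2 * (1 - α / 2)) = 2 - α by ring]
  have hmul : cos (arctan β) ^ (2 - α) * cos (arctan β) ^ (α - 1) = cos (arctan β) := by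
    rw [← rpow_add hcos, show 2 - α + (α - 1) = 1 by ring, rpow_one]
  rw [F, div_sq_add_one_eq_sin_mul_cos_arctan, div_eq_mul_inv α, hinv]
  linear_combination -sin (arctan β) * hmul

theorem stmt1_general (α : ℝ) (hα : 1 ≤ α) (β : ℝ) : F α β < 0 := by
  set a := arctan β
  have ha₁ : -(π / 2) < a := neg_pi_div_two_lt_arctan β
  have ha₂ : a < π / 2 := arctan_lt_pi_div_two β
  have hpos : 0 < ∫ θ in (-a)..(π / 2), cos θ ^ α :=
    integral_cos_rpow_pos (by linarith) (by linarith) (by linarith) le_rfl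
  have hlt : sin a * cos a ^ (α - 1) < α * ∫ θ in (-a)..(π / 2), cos θ ^ α :=
    (sin_mul_cos_rpow_sub_one_lt_integral hα ha₁ ha₂.le).trans_le
      (le_mul_of_one_le_left hpos.le hα)
  rw [F_eq_cos_arctan_rpow_mul]
  exact mul_neg_of_pos_of_neg (rpow_pos_of_pos (cos_arctan_pos β) _) (sub_neg.mpr hlt)

theorem stmt1 (α : ℝ) (hα1 : 1 ≤ α) (hα2 : α < 2) (β : ℝ) (hβ : 0 ≤ β) :
    F α β < 0 :=
  stmt1_general α hα1 β
end

section
/- For every α with 0 ≤ α < 2 there exists a constant C_α > 0, depending only on α, such that for every β ≥ 0, every M > 0, and every a with 0 < a ≤ M/2, one has |∫_{M/max(β,1)}^∞ ((α+1)(a−βy)² − y²) / ((a−βy)² + y²)^{2+α/2} dy| ≤ C_α / M^{1+α}. -/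
open MeasureTheory Real

/-!
The integrand is a kernel homogeneous of degree `-(2 + α)`, evaluated at the point `(a - βy, y)` of
a line, so it is `O(|(a - βy, y)| ^ (-(2 + α)))`. Put `m = max β 1`. Beyond `y = M / m` the
condition `a ≤ M / 2` gives `a ≤ my / 2`, which keeps that point at distance at least `my / 2` from
the origin: the second coordinate does it when `β ≤ 1`, the first when `β ≥ 1`. Integrating
`(my / 2) ^ (-(2 + α))` over `y > M / m` gives a constant times `m⁻¹ * M ^ (-(1 + α))`, and `m ≥ 1`.
-/

theorem abs_mul_sq_sub_sq_le (c x y : ℝ) :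
    |c * x ^ 2 - y ^ 2| ≤ max |c| 1 * (x ^ 2 + y ^ 2) :=
  calc |c * x ^ 2 - y ^ 2| ≤ |c * x ^ 2| + |y ^ 2| := abs_sub _ _
    _ = |c| * x ^ 2 + 1 * y ^ 2 := by rw [abs_mul, abs_sq, abs_sq, one_mul]
    _ ≤ max |c| 1 * x ^ 2 + max |c| 1 * y ^ 2 := by
      gcongr
      exacts [le_max_left _ _, le_max_right _ _]
    _ = max |c| 1 * (x ^ 2 + y ^ 2) := (mul_add _ _ _).symm

theorem abs_mul_sq_sub_sq_div_rpow_le {r s x y : ℝ} (c : ℝ) (hs : 1 ≤ s) (hr : 0 < r)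
    (hrxy : r ^ 2 ≤ x ^ 2 + y ^ 2) :
    |(c * x ^ 2 - y ^ 2) / (x ^ 2 + y ^ 2) ^ s| ≤ max |c| 1 * r ^ (2 * (1 - s)) := by
  have hD : 0 < x ^ 2 + y ^ 2 := (pow_pos hr 2).trans_le hrxy
  calc |(c * x ^ 2 - y ^ 2) / (x ^ 2 + y ^ 2) ^ s|
      = |c * x ^ 2 - y ^ 2| / (x ^ 2 + y ^ 2) ^ s := by
        rw [abs_div, abs_of_pos (rpow_pos_of_pos hD s)]
    _ ≤ max |c| 1 * (x ^ 2 + y ^ 2) / (x ^ 2 + y ^ 2) ^ s := by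
        gcongr
        exact abs_mul_sq_sub_sq_le c x y
    _ = max |c| 1 * (x ^ 2 + y ^ 2) ^ (1 - s) := by rw [rpow_sub hD, rpow_one, mul_div_assoc]
    _ ≤ max |c| 1 * (r ^ 2) ^ (1 - s) := by
        gcongr max |c| 1 * ?_
        exact rpow_le_rpow_of_nonpos (pow_pos hr 2) hrxy (sub_nonpos.2 hs)
    _ = max |c| 1 * r ^ (2 * (1 - s)) := by rw [rpow_mul hr.le, rpow_two]

theorem sq_max_one_div_two_mul_le_sq_add_sq {β a y : ℝ} (hy : 0 ≤ y) (ha : a ≤ max β 1 / 2 * y) :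
    (max β 1 / 2 * y) ^ 2 ≤ (a - β * y) ^ 2 + y ^ 2 := by
  rcases le_total β 1 with hβ | hβ
  · rw [max_eq_right hβ]
    nlinarith [sq_nonneg (a - β * y), sq_nonneg y]
  · rw [max_eq_left hβ] at ha ⊢
    have hfar : β / 2 * y ≤ β * y - a := by linarith
    calc (β / 2 * y) ^ 2 ≤ (β * y - a) ^ 2 := by gcongr
      _ = (a - β * y) ^ 2 := sub_sq_comm _ _
      _ ≤ (a - β * y) ^ 2 + y ^ 2 := le_add_of_nonneg_right (sq_nonneg y)

theorem norm_setIntegral_Ioi_le_of_norm_le_mul_rpow {E : Type*} [NormedAddCommGroup E]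
    [NormedSpace ℝ E] {f : ℝ → E} {B k c p : ℝ} (hp : p < -1) (hk : 0 < k) (hc : 0 < c)
    (hf : ∀ y ∈ Set.Ioi c, ‖f y‖ ≤ B * (k * y) ^ p) :
    ‖∫ y in Set.Ioi c, f y‖ ≤ B * (k⁻¹ * (-(k * c) ^ (p + 1) / (p + 1))) := by
  have hkc : 0 < k * c := mul_pos hk hc
  have hint : IntegrableOn (fun y ↦ (k * y) ^ p) (Set.Ioi c) :=
    (integrableOn_Ioi_comp_mul_left_iff (fun u ↦ u ^ p) c hk).2
      (integrableOn_Ioi_rpow_of_lt hp hkc)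
  calc ‖∫ y in Set.Ioi c, f y‖ ≤ ∫ y in Set.Ioi c, B * (k * y) ^ p :=
        norm_integral_le_of_norm_le (hint.const_mul B)
          (ae_restrict_of_forall_mem measurableSet_Ioi hf)
    _ = B * (k⁻¹ * (-(k * c) ^ (p + 1) / (p + 1))) := by
        rw [integral_const_mul, integral_comp_mul_left_Ioi (fun u ↦ u ^ p) c hk,
          integral_Ioi_rpow_of_lt hp hkc, smul_eq_mul]

theorem abs_setIntegral_Ioi_div_max_one_le {α β M a : ℝ} (hα : -1 < α) (hM : 0 < M)
    (ha : a ≤ M / 2) :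
    |∫ y in Set.Ioi (M / max β 1),
        ((α + 1) * (a - β * y) ^ 2 - y ^ 2) / ((a - β * y) ^ 2 + y ^ 2) ^ (2 + α / 2)| ≤
      max |α + 1| 1 * (2 * 2 ^ (1 + α)) / (1 + α) / M ^ (1 + α) / max β 1 := by
  have hm : 0 < max β 1 := lt_max_of_lt_right one_pos
  have hpointwise : ∀ y ∈ Set.Ioi (M / max β 1),
      ‖((α + 1) * (a - β * y) ^ 2 - y ^ 2) / ((a - β * y) ^ 2 + y ^ 2) ^ (2 + α / 2)‖ ≤
        max |α + 1| 1 * (max β 1 / 2 * y) ^ (2 * (1 - (2 + α / 2))) := by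
    intro y hy
    have hy₀ : 0 < y := (div_pos hM hm).trans hy
    have hMy : M < max β 1 * y := (div_lt_iff₀' hm).1 hy
    exact abs_mul_sq_sub_sq_div_rpow_le _ (by linarith) (by positivity)
      (sq_max_one_div_two_mul_le_sq_add_sq hy₀.le (by linarith))
  have hexponent : 2 * (1 - (2 + α / 2)) + 1 = -(1 + α) := by ring
  have hscale : max β 1 / 2 * (M / max β 1) = M / 2 := by field_simp
  calc _ ≤ max |α + 1| 1 * ((max β 1 / 2)⁻¹ * (-(M / 2) ^ (-(1 + α)) / -(1 + α))) := by
        simpa only [hexponent, hscale, norm_eq_abs] using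
          norm_setIntegral_Ioi_le_of_norm_le_mul_rpow (by linarith) (half_pos hm)
            (div_pos hM hm) hpointwise
    _ = max |α + 1| 1 * (2 * 2 ^ (1 + α)) / (1 + α) / M ^ (1 + α) / max β 1 := by
        rw [neg_div_neg_eq, rpow_neg (half_pos hM).le, div_rpow hM.le zero_le_two, inv_div, inv_div]
        ring

theorem stmt9_general (α : ℝ) (hα : -1 < α) :
    ∃ C : ℝ, 0 < C ∧ ∀ β M a : ℝ, 0 < M → a ≤ M / 2 →
      |∫ y in Set.Ioi (M / max β 1),
          ((α + 1) * (a - β * y) ^ 2 - y ^ 2) / ((a - β * y) ^ 2 + y ^ 2) ^ (2 + α / 2)| ≤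
        C / M ^ (1 + α) := by
  have hα' : 0 < 1 + α := by linarith
  refine ⟨max |α + 1| 1 * (2 * 2 ^ (1 + α)) / (1 + α), by positivity, fun β M a hM ha ↦ ?_⟩
  exact (abs_setIntegral_Ioi_div_max_one_le hα hM ha).trans
    (div_le_self (by positivity) (le_max_right β 1))

theorem stmt9 (α : ℝ) (hα0 : 0 ≤ α) (hα2 : α < 2) :
    ∃ C : ℝ, 0 < C ∧ ∀ β M a : ℝ, 0 ≤ β → 0 < M → 0 < a → a ≤ M / 2 →
      |∫ y in Set.Ioi (M / max β 1),
          ((α + 1) * (a - β * y) ^ 2 - y ^ 2) / ((a - β * y) ^ 2 + y ^ 2) ^ (2 + α / 2)| ≤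
        C / M ^ (1 + α) := by
  obtain ⟨C, hC, hbound⟩ := stmt9_general α (by linarith)
  exact ⟨C, hC, fun β M a _ hM _ haM ↦ hbound β M a hM haM⟩
end

section
/- For every α with 0 ≤ α < 2 there exists a constant C_α > 0, depending only on α, such that the following holds: for every M > 0 and every measurable set E ⊆ ℝ² of finite Lebesgue measure with E ∩ [−M,M]² = ∅, the function B(a) := ∫_E (a−y₁)/((a−y₁)² + y₂²)^{1+α/2} dy₁ dy₂ is twice differentiable on (0, M/2] and satisfies |B′(a)| ≤ C_α |E| / M^{2+α} and |B″(a)| ≤ C_α |E| / M^{3+α} for every a ∈ (0, M/2]. -/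
open MeasureTheory Real

/-! With `R = x² + y²` and `p = 1 + α / 2`, the kernel is `k_p = x R⁻ᵖ`. Since
`∂ₓ R⁻ᵖ = -2p k_{p+1}`, one finds `∂ₓ k_p = R⁻ᵖ - 2p x k_{p+1}`, and differentiating once more
expresses `∂ₓ² k_p` through `k_{p+1}` and `∂ₓ k_{p+1}`. At distance at least `r` from the origin,
`|x| ≤ R^{1/2}` bounds these three functions by multiples of `r^{1-2p}`, `r^{-2p}` and `r^{-1-2p}`.
When `a` stays in a smaller concentric interval, the points `(a, 0)` keep a distance comparable to
`M` from the complement of `[-M, M]²`, so `B` may be differentiated twice under the integral. -/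

section Kernel

variable {p r x y : ℝ}

/-- The radial function `|z|^{-2p}` at the point `z = (x, y)` of the Euclidean plane. -/
noncomputable def radialPower (p x y : ℝ) : ℝ := (x ^ 2 + y ^ 2) ^ (-p)

/-- The first component of the Riesz-type vector kernel `z / |z|^{2p}` at `z = (x, y)`. -/
noncomputable def rieszKernel (p x y : ℝ) : ℝ := x * radialPower p x y

/-- The derivative in `x` of `rieszKernel p x y` away from the origin. -/
noncomputable def rieszKernelDeriv (p x y : ℝ) : ℝ :=
  radialPower p x y - 2 * p * (x * rieszKernel (p + 1) x y)

/-- The second derivative in `x` of `rieszKernel p x y` away from the origin. -/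
noncomputable def rieszKernelDeriv₂ (p x y : ℝ) : ℝ :=
  -(4 * p * rieszKernel (p + 1) x y) - 2 * p * (x * rieszKernelDeriv (p + 1) x y)

lemma rieszKernel_eq_div (p x y : ℝ) : rieszKernel p x y = x / (x ^ 2 + y ^ 2) ^ p := by
  rw [rieszKernel, radialPower, rpow_neg (by positivity), div_eq_mul_inv]

lemma measurable_radialPower (p : ℝ) : Measurable (Function.uncurry (radialPower p)) := by
  unfold radialPower Function.uncurry
  fun_prop

lemma measurable_rieszKernel (p : ℝ) : Measurable (Function.uncurry (rieszKernel p)) :=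
  measurable_fst.mul (measurable_radialPower p)

lemma measurable_rieszKernelDeriv (p : ℝ) : Measurable (Function.uncurry (rieszKernelDeriv p)) :=
  (measurable_radialPower p).sub
    ((measurable_fst.mul (measurable_rieszKernel (p + 1))).const_mul (2 * p))

lemma measurable_rieszKernelDeriv₂ (p : ℝ) :
    Measurable (Function.uncurry (rieszKernelDeriv₂ p)) :=
  ((measurable_rieszKernel (p + 1)).const_mul (4 * p)).neg.sub
    ((measurable_fst.mul (measurable_rieszKernelDeriv (p + 1))).const_mul (2 * p))

lemma hasDerivAt_radialPower (p : ℝ) (h : 0 < x ^ 2 + y ^ 2) :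
    HasDerivAt (radialPower p · y) (-(2 * p * rieszKernel (p + 1) x y)) x := by
  have hsq : HasDerivAt (fun x => x ^ 2 + y ^ 2) (2 * x) x := by
    simpa using (hasDerivAt_pow 2 x).add_const (y ^ 2)
  refine (hsq.rpow_const (p := -p) (.inl h.ne')).congr_deriv ?_
  rw [rieszKernel, radialPower, neg_add']
  ring

lemma hasDerivAt_rieszKernel (p : ℝ) (h : 0 < x ^ 2 + y ^ 2) :
    HasDerivAt (rieszKernel p · y) (rieszKernelDeriv p x y) x := by
  refine ((hasDerivAt_id' x).mul (hasDerivAt_radialPower p h)).congr_deriv ?_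
  rw [rieszKernelDeriv]
  ring

lemma hasDerivAt_rieszKernelDeriv (p : ℝ) (h : 0 < x ^ 2 + y ^ 2) :
    HasDerivAt (rieszKernelDeriv p · y) (rieszKernelDeriv₂ p x y) x := by
  refine ((hasDerivAt_radialPower p h).sub (((hasDerivAt_id' x).mul
    (hasDerivAt_rieszKernel (p + 1) h)).const_mul (2 * p))).congr_deriv ?_
  rw [rieszKernelDeriv₂]
  ring

lemma radialPower_nonneg (p x y : ℝ) : 0 ≤ radialPower p x y := by
  unfold radialPower
  positivity

lemma abs_rieszKernel (p x y : ℝ) : |rieszKernel p x y| = |x| * radialPower p x y := by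
  rw [rieszKernel, abs_mul, abs_of_nonneg (radialPower_nonneg p x y)]

lemma radialPower_le (hp : 0 ≤ p) (hr : 0 < r) (h : r ^ 2 ≤ x ^ 2 + y ^ 2) :
    radialPower p x y ≤ r ^ (-(2 * p)) :=
  calc (x ^ 2 + y ^ 2) ^ (-p) ≤ (r ^ 2) ^ (-p) :=
        rpow_le_rpow_of_nonpos (by positivity) h (neg_nonpos.2 hp)
    _ = r ^ (-(2 * p)) := by rw [← rpow_natCast_mul hr.le, Nat.cast_ofNat, mul_neg]

lemma abs_rieszKernel_le_radialPower (p : ℝ) (h : 0 < x ^ 2 + y ^ 2) :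
    |rieszKernel p x y| ≤ radialPower (p - 1 / 2) x y := by
  have hx : |x| ≤ (x ^ 2 + y ^ 2) ^ (1 / 2 : ℝ) := by
    rw [← sqrt_eq_rpow]
    exact abs_le_sqrt (le_add_of_nonneg_right (sq_nonneg y))
  calc |rieszKernel p x y| = |x| * radialPower p x y := abs_rieszKernel p x y
    _ ≤ (x ^ 2 + y ^ 2) ^ (1 / 2 : ℝ) * radialPower p x y :=
        mul_le_mul_of_nonneg_right hx (radialPower_nonneg p x y)
    _ = radialPower (p - 1 / 2) x y := by
        rw [radialPower, radialPower, ← rpow_add h, neg_sub, sub_eq_add_neg]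

lemma abs_rieszKernel_le (hp : 1 / 2 ≤ p) (hr : 0 < r) (h : r ^ 2 ≤ x ^ 2 + y ^ 2) :
    |rieszKernel p x y| ≤ r ^ (1 - 2 * p) :=
  calc |rieszKernel p x y| ≤ radialPower (p - 1 / 2) x y :=
        abs_rieszKernel_le_radialPower p ((pow_pos hr 2).trans_le h)
    _ ≤ r ^ (-(2 * (p - 1 / 2))) := radialPower_le (sub_nonneg.2 hp) hr h
    _ = r ^ (1 - 2 * p) := by ring_nf

lemma mul_rieszKernel_add_one_mem_Icc (p : ℝ) (h : 0 < x ^ 2 + y ^ 2) :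
    x * rieszKernel (p + 1) x y ∈ Set.Icc 0 (radialPower p x y) := by
  have hsq : x * rieszKernel (p + 1) x y = x ^ 2 * radialPower (p + 1) x y := by
    rw [rieszKernel]
    ring
  have hradial : radialPower p x y = (x ^ 2 + y ^ 2) * radialPower (p + 1) x y := by
    rw [radialPower, radialPower, neg_add', rpow_sub_one h.ne', mul_div_cancel₀ _ h.ne']
  have hnonneg := radialPower_nonneg (p + 1) x y
  rw [hsq, hradial]
  exact ⟨by positivity, by gcongr; exact le_add_of_nonneg_right (sq_nonneg y)⟩

lemma abs_rieszKernelDeriv_le_radialPower (hp : 0 ≤ p) (h : 0 < x ^ 2 + y ^ 2) :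
    |rieszKernelDeriv p x y| ≤ (1 + 2 * p) * radialPower p x y := by
  obtain ⟨hlow, hupp⟩ := mul_rieszKernel_add_one_mem_Icc p h
  have hscaled := mul_le_mul_of_nonneg_left hupp (mul_nonneg zero_le_two hp)
  have hscaled_nonneg := mul_nonneg (mul_nonneg zero_le_two hp) hlow
  rw [rieszKernelDeriv, abs_le]
  constructor <;> linarith [radialPower_nonneg p x y]

lemma abs_rieszKernelDeriv_le (hp : 0 ≤ p) (hr : 0 < r) (h : r ^ 2 ≤ x ^ 2 + y ^ 2) :
    |rieszKernelDeriv p x y| ≤ (1 + 2 * p) * r ^ (-(2 * p)) :=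
  (abs_rieszKernelDeriv_le_radialPower hp ((pow_pos hr 2).trans_le h)).trans <|
    mul_le_mul_of_nonneg_left (radialPower_le hp hr h) (by positivity)

lemma abs_rieszKernelDeriv₂_le_rieszKernel (hp : 0 ≤ p) (h : 0 < x ^ 2 + y ^ 2) :
    |rieszKernelDeriv₂ p x y| ≤ 2 * p * (2 * p + 5) * |rieszKernel (p + 1) x y| := by
  have hderiv : |x * rieszKernelDeriv (p + 1) x y| ≤
      (2 * p + 3) * |rieszKernel (p + 1) x y| := by
    rw [abs_mul, abs_rieszKernel]
    calc |x| * |rieszKernelDeriv (p + 1) x y|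
        ≤ |x| * ((1 + 2 * (p + 1)) * radialPower (p + 1) x y) := by
          gcongr
          exact abs_rieszKernelDeriv_le_radialPower (by positivity) h
      _ = (2 * p + 3) * (|x| * radialPower (p + 1) x y) := by ring
  calc |rieszKernelDeriv₂ p x y|
      ≤ |4 * p * rieszKernel (p + 1) x y| + |2 * p * (x * rieszKernelDeriv (p + 1) x y)| := by
        simpa only [rieszKernelDeriv₂, abs_neg] using abs_sub (-(4 * p * rieszKernel (p + 1) x y)) _
    _ = 4 * p * |rieszKernel (p + 1) x y| + 2 * p * |x * rieszKernelDeriv (p + 1) x y| := by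
        rw [abs_mul, abs_mul (2 * p), abs_of_nonneg (by positivity : 0 ≤ 4 * p),
          abs_of_nonneg (by positivity : 0 ≤ 2 * p)]
    _ ≤ 4 * p * |rieszKernel (p + 1) x y| +
          2 * p * ((2 * p + 3) * |rieszKernel (p + 1) x y|) := by gcongr
    _ = 2 * p * (2 * p + 5) * |rieszKernel (p + 1) x y| := by ring

lemma abs_rieszKernelDeriv₂_le (hp : 0 ≤ p) (hr : 0 < r) (h : r ^ 2 ≤ x ^ 2 + y ^ 2) :
    |rieszKernelDeriv₂ p x y| ≤ 2 * p * (2 * p + 5) * r ^ (-(2 * p + 1)) :=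
  calc |rieszKernelDeriv₂ p x y| ≤ 2 * p * (2 * p + 5) * |rieszKernel (p + 1) x y| :=
        abs_rieszKernelDeriv₂_le_rieszKernel hp ((pow_pos hr 2).trans_le h)
    _ ≤ 2 * p * (2 * p + 5) * r ^ (1 - 2 * (p + 1)) := by
        gcongr
        exact abs_rieszKernel_le (by linarith) hr h
    _ = 2 * p * (2 * p + 5) * r ^ (-(2 * p + 1)) := by ring_nf

end Kernel

section AxisPotential

variable {k k' : ℝ → ℝ → ℝ} {μ : Measure (ℝ × ℝ)} [IsFiniteMeasure μ]
  {s : Set ℝ} {p r a K K' : ℝ}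

/-- The potential of the measure `μ` with kernel `k`, evaluated at the point `(b, 0)` of the first
axis. The second argument of `k` is `z.2` rather than `-z.2`, which makes no difference for the
kernels above, even in that variable. -/
noncomputable def axisPotential (k : ℝ → ℝ → ℝ) (μ : Measure (ℝ × ℝ)) (b : ℝ) : ℝ :=
  ∫ z, k (b - z.1) z.2 ∂μ

lemma abs_axisPotential_le (hfar : ∀ᵐ z ∂μ, r ^ 2 ≤ (a - z.1) ^ 2 + z.2 ^ 2)
    (hbound : ∀ x y, r ^ 2 ≤ x ^ 2 + y ^ 2 → |k x y| ≤ K) :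
    |axisPotential k μ a| ≤ K * μ.real Set.univ :=
  norm_integral_le_of_norm_le_const (f := fun z : ℝ × ℝ => k (a - z.1) z.2)
    (hfar.mono fun _ hz => hbound _ _ hz)

lemma hasDerivAt_axisPotential (hs : s ∈ nhds a)
    (hfar : ∀ᵐ z ∂μ, ∀ b ∈ s, r ^ 2 ≤ (b - z.1) ^ 2 + z.2 ^ 2)
    (hk : Measurable (Function.uncurry k)) (hk' : Measurable (Function.uncurry k'))
    (hderiv : ∀ x y, r ^ 2 ≤ x ^ 2 + y ^ 2 → HasDerivAt (k · y) (k' x y) x)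
    (hbound : ∀ x y, r ^ 2 ≤ x ^ 2 + y ^ 2 → |k x y| ≤ K)
    (hbound' : ∀ x y, r ^ 2 ≤ x ^ 2 + y ^ 2 → |k' x y| ≤ K') :
    HasDerivAt (axisPotential k μ) (axisPotential k' μ a) a := by
  have htranslate (b : ℝ) : Measurable fun z : ℝ × ℝ => (b - z.1, z.2) := by fun_prop
  have hint : Integrable (fun z : ℝ × ℝ => k (a - z.1) z.2) μ :=
    .of_bound (hk.comp (htranslate a)).aestronglyMeasurable K
      (hfar.mono fun _ hz => hbound _ _ (hz a (mem_of_mem_nhds hs)))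
  exact (hasDerivAt_integral_of_dominated_loc_of_deriv_le
    (F := fun b z => k (b - z.1) z.2) (F' := fun b z => k' (b - z.1) z.2) hs
    (.of_forall fun b => (hk.comp (htranslate b)).aestronglyMeasurable) hint
    (hk'.comp (htranslate a)).aestronglyMeasurable
    (hfar.mono fun _ hz b hb => hbound' _ _ (hz b hb)) (integrable_const K')
    (hfar.mono fun z hz b hb => (hderiv _ _ (hz b hb)).comp_sub_const b z.1)).2

lemma hasDerivAt_axisPotential_rieszKernel (hp : 1 / 2 ≤ p) (hr : 0 < r) (hs : s ∈ nhds a)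
    (hfar : ∀ᵐ z ∂μ, ∀ b ∈ s, r ^ 2 ≤ (b - z.1) ^ 2 + z.2 ^ 2) :
    HasDerivAt (axisPotential (rieszKernel p) μ) (axisPotential (rieszKernelDeriv p) μ a) a :=
  hasDerivAt_axisPotential hs hfar (measurable_rieszKernel p) (measurable_rieszKernelDeriv p)
    (fun _ _ h => hasDerivAt_rieszKernel p ((pow_pos hr 2).trans_le h))
    (fun _ _ => abs_rieszKernel_le hp hr) (fun _ _ => abs_rieszKernelDeriv_le (by linarith) hr)

lemma hasDerivAt_axisPotential_rieszKernelDeriv (hp : 0 ≤ p) (hr : 0 < r) (hs : s ∈ nhds a)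
    (hfar : ∀ᵐ z ∂μ, ∀ b ∈ s, r ^ 2 ≤ (b - z.1) ^ 2 + z.2 ^ 2) :
    HasDerivAt (axisPotential (rieszKernelDeriv p) μ)
      (axisPotential (rieszKernelDeriv₂ p) μ a) a :=
  hasDerivAt_axisPotential hs hfar (measurable_rieszKernelDeriv p) (measurable_rieszKernelDeriv₂ p)
    (fun _ _ h => hasDerivAt_rieszKernelDeriv p ((pow_pos hr 2).trans_le h))
    (fun _ _ => abs_rieszKernelDeriv_le hp hr) (fun _ _ => abs_rieszKernelDeriv₂_le hp hr)

lemma hasDerivAt_deriv_axisPotential_rieszKernel (hp : 1 / 2 ≤ p) (hr : 0 < r) (hs : s ∈ nhds a)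
    (hfar : ∀ᵐ z ∂μ, ∀ b ∈ s, r ^ 2 ≤ (b - z.1) ^ 2 + z.2 ^ 2) :
    HasDerivAt (deriv (axisPotential (rieszKernel p) μ))
      (axisPotential (rieszKernelDeriv₂ p) μ a) a := by
  refine (hasDerivAt_axisPotential_rieszKernelDeriv (by linarith) hr hs hfar).congr_of_eventuallyEq
    ?_
  filter_upwards [eventually_mem_nhds_iff.2 hs] with b hb
  exact (hasDerivAt_axisPotential_rieszKernel hp hr hb hfar).deriv

lemma abs_deriv_axisPotential_rieszKernel_le (hp : 1 / 2 ≤ p) (hr : 0 < r) (hs : s ∈ nhds a)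
    (hfar : ∀ᵐ z ∂μ, ∀ b ∈ s, r ^ 2 ≤ (b - z.1) ^ 2 + z.2 ^ 2) :
    |deriv (axisPotential (rieszKernel p) μ) a| ≤
      (1 + 2 * p) * r ^ (-(2 * p)) * μ.real Set.univ := by
  rw [(hasDerivAt_axisPotential_rieszKernel hp hr hs hfar).deriv]
  exact abs_axisPotential_le (hfar.mono fun _ hz => hz a (mem_of_mem_nhds hs))
    fun _ _ => abs_rieszKernelDeriv_le (by linarith) hr

lemma abs_deriv_deriv_axisPotential_rieszKernel_le (hp : 1 / 2 ≤ p) (hr : 0 < r)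
    (hs : s ∈ nhds a) (hfar : ∀ᵐ z ∂μ, ∀ b ∈ s, r ^ 2 ≤ (b - z.1) ^ 2 + z.2 ^ 2) :
    |deriv (deriv (axisPotential (rieszKernel p) μ)) a| ≤
      2 * p * (2 * p + 5) * r ^ (-(2 * p + 1)) * μ.real Set.univ := by
  rw [(hasDerivAt_deriv_axisPotential_rieszKernel hp hr hs hfar).deriv]
  exact abs_axisPotential_le (hfar.mono fun _ hz => hz a (mem_of_mem_nhds hs))
    fun _ _ => abs_rieszKernelDeriv₂_le (by linarith) hr

end AxisPotential

lemma sq_le_sq_add_sq_of_notMem_square {M r b : ℝ} {z : ℝ × ℝ} (hr : 0 ≤ r) (hb : |b| ≤ M - r)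
    (hz : z ∉ Set.Icc (-M) M ×ˢ Set.Icc (-M) M) : r ^ 2 ≤ (b - z.1) ^ 2 + z.2 ^ 2 := by
  by_contra! hlt
  have hfst : |b - z.1| ≤ r := abs_le_of_sq_le_sq (by linarith [sq_nonneg z.2]) hr
  have hsnd : |z.2| ≤ r := abs_le_of_sq_le_sq (by linarith [sq_nonneg (b - z.1)]) hr
  rw [abs_le] at hb hfst hsnd
  exact hz ⟨⟨by linarith, by linarith⟩, ⟨by linarith, by linarith⟩⟩

theorem stmt11_general (α θ : ℝ) (hα : -1 ≤ α) (hθ : θ < 1) :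
    ∃ C : ℝ, 0 < C ∧ ∀ M : ℝ, 0 < M → ∀ (μ : Measure (ℝ × ℝ)) [IsFiniteMeasure μ],
      μ (Set.Icc (-M) M ×ˢ Set.Icc (-M) M) = 0 →
      ∀ B : ℝ → ℝ,
        (∀ b : ℝ, B b = ∫ y, (b - y.1) / ((b - y.1) ^ 2 + y.2 ^ 2) ^ (1 + α / 2) ∂μ) →
        ∀ a : ℝ, |a| ≤ θ * M →
          DifferentiableAt ℝ B a ∧ DifferentiableAt ℝ (deriv B) a ∧
          |deriv B a| ≤ C * μ.real Set.univ / M ^ (2 + α) ∧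
          |deriv (deriv B) a| ≤ C * μ.real Set.univ / M ^ (3 + α) := by
  obtain ⟨δ, hδ, hδθ⟩ : ∃ δ, 0 < δ ∧ δ + θ < 1 := ⟨(1 - θ) / 2, by linarith, by linarith⟩
  obtain ⟨p, hp, rfl⟩ : ∃ p, 1 / 2 ≤ p ∧ α = 2 * p - 2 := ⟨1 + α / 2, by linarith, by ring⟩
  rw [show 1 + (2 * p - 2) / 2 = p by ring, show 2 + (2 * p - 2) = 2 * p by ring,
    show 3 + (2 * p - 2) = 2 * p + 1 by ring]
  set C₁ := (1 + 2 * p) * δ ^ (-(2 * p)) with hC₁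
  set C₂ := 2 * p * (2 * p + 5) * δ ^ (-(2 * p + 1)) with hC₂
  have hC₁_pos : 0 < C₁ := by positivity
  have hC₂_pos : 0 < C₂ := by positivity
  refine ⟨C₁ + C₂, add_pos hC₁_pos hC₂_pos, fun M hM μ _ hμ B hB a ha => ?_⟩
  have hr : 0 < δ * M := mul_pos hδ hM
  have hs : {b : ℝ | |b| < M - δ * M} ∈ nhds a :=
    (isOpen_lt continuous_abs continuous_const).mem_nhds
      (ha.trans_lt (by linarith [mul_lt_mul_of_pos_right hδθ hM]))
  have hfar : ∀ᵐ z ∂μ, ∀ b ∈ {b : ℝ | |b| < M - δ * M}, (δ * M) ^ 2 ≤ (b - z.1) ^ 2 + z.2 ^ 2 :=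
    (measure_eq_zero_iff_ae_notMem.1 hμ).mono fun z hz b hb =>
      sq_le_sq_add_sq_of_notMem_square hr.le (le_of_lt hb) hz
  obtain rfl : B = axisPotential (rieszKernel p) μ := by
    funext b
    simp only [hB, axisPotential, rieszKernel_eq_div]
  refine ⟨(hasDerivAt_axisPotential_rieszKernel hp hr hs hfar).differentiableAt,
    (hasDerivAt_deriv_axisPotential_rieszKernel hp hr hs hfar).differentiableAt, ?_, ?_⟩
  · calc _ ≤ (1 + 2 * p) * (δ * M) ^ (-(2 * p)) * μ.real Set.univ :=
          abs_deriv_axisPotential_rieszKernel_le hp hr hs hfar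
      _ = C₁ * μ.real Set.univ / M ^ (2 * p) := by
          rw [mul_rpow hδ.le hM.le, rpow_neg hM.le, hC₁]
          ring
      _ ≤ (C₁ + C₂) * μ.real Set.univ / M ^ (2 * p) := by gcongr; linarith
  · calc _ ≤ 2 * p * (2 * p + 5) * (δ * M) ^ (-(2 * p + 1)) * μ.real Set.univ :=
          abs_deriv_deriv_axisPotential_rieszKernel_le hp hr hs hfar
      _ = C₂ * μ.real Set.univ / M ^ (2 * p + 1) := by
          rw [mul_rpow hδ.le hM.le, rpow_neg hM.le, hC₂]
          ring
      _ ≤ (C₁ + C₂) * μ.real Set.univ / M ^ (2 * p + 1) := by gcongr; linarith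

theorem stmt11 (α : ℝ) (hα0 : 0 ≤ α) (hα2 : α < 2) :
    ∃ C : ℝ, 0 < C ∧ ∀ M : ℝ, 0 < M → ∀ E : Set (ℝ × ℝ),
      MeasurableSet E → volume E < ⊤ →
      E ∩ (Set.Icc (-M) M ×ˢ Set.Icc (-M) M) = ∅ →
      ∀ B : ℝ → ℝ,
        (∀ b : ℝ, B b = ∫ y in E,
          (b - y.1) / ((b - y.1) ^ 2 + y.2 ^ 2) ^ (1 + α / 2)) →
        ∀ a ∈ Set.Ioc 0 (M / 2),
          DifferentiableAt ℝ B a ∧ DifferentiableAt ℝ (deriv B) a ∧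
          |deriv B a| ≤ C * (volume E).toReal / M ^ (2 + α) ∧
          |deriv (deriv B) a| ≤ C * (volume E).toReal / M ^ (3 + α) := by
  obtain ⟨C, hC, hgeneral⟩ := stmt11_general α (1 / 2) (by linarith) one_half_lt_one
  refine ⟨C, hC, fun M hM E _ hE hEM B hB a ha => ?_⟩
  have : Fact (volume E < ⊤) := ⟨hE⟩
  have hnull : volume.restrict E (Set.Icc (-M) M ×ˢ Set.Icc (-M) M) = 0 := by
    rw [Measure.restrict_apply (measurableSet_Icc.prod measurableSet_Icc), Set.inter_comm, hEM,
      measure_empty]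
  have haM : |a| ≤ 1 / 2 * M := by
    rw [abs_of_pos ha.1]
    linarith [ha.2]
  simpa only [measureReal_def, Measure.restrict_apply_univ] using
    hgeneral M hM (volume.restrict E) hnull B hB a haM
end
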